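/- arXiv:2201.04462 — 3 statements merged into one kernel-verified Lean document; each statement's English description precedes it below -/
import Mathlib

section
/- Let f : ℝⁿ → ℝⁿ satisfy f(cx) = c f(x) for all c ≠ 0 and f(z) ≠ 0 for all z ≠ 0. Let x be a unit vector with f(x) = λx for some λ ≠ 0, suppose f is differentiable at x with total derivative represented by the matrix J ∈ ℝ^{n×n}, and let O ∈ ℝ^{n×(n−1)} be a matrix whose columns form an orthonormal basis of the orthogonal complement of x. If every complex eigenvalue of the (n−1)×(n−1) matrix (1/λ) OᵀJO has modulus strictly less than 1 (i.e., this matrix is Schur), then the o-line span{x} ∖ {0} is locally attractive for f. -/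
open Matrix Filter

open Topology Function Module

/-! After rescaling, `f` induces the map `G z = (φ (f z))⁻¹ • f z` on the affine chart `φ = 1` of
projective space, where `φ = ⟪x, ·⟫`. It fixes `x`, and its derivative there is `T ∘ S` with
`S = λ⁻¹ P J`, where `P` is the orthogonal projection onto `xᗮ` and `T` is the inclusion of `xᗮ`.
The other composition `S ∘ T` is the operator on `xᗮ` with matrix `λ⁻¹ OᵀJO`, whose powers tend to
zero by Gelfand's formula. Since `(T S)ᵏ⁺¹ = T (S T)ᵏ S`, some power of `T ∘ S` has norm less
than `1`, so the corresponding iterate of `G` is a contraction towards `x`. Finally, homogeneity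
makes the orbits of `f` and `G` proportional. -/

section TopologicallyNilpotent

lemma isTopologicallyNilpotent_of_spectralRadius_lt_one {A : Type*} [NormedRing A]
    [NormedAlgebra ℂ A] [CompleteSpace A] {a : A} (ha : spectralRadius ℂ a < 1) :
    IsTopologicallyNilpotent a := by
  obtain ⟨q, hq, hq1⟩ := ENNReal.lt_iff_exists_nnreal_btwn.1 ha
  have hq1 : q < 1 := mod_cast hq1
  have hbound : ∀ᶠ k : ℕ in atTop, ‖a ^ k‖ ≤ (q : ℝ) ^ k := by
    filter_upwards [eventually_ne_atTop 0,
      (spectrum.pow_nnnorm_pow_one_div_tendsto_nhds_spectralRadius a).eventually_lt_const hq]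
      with k hk hroot
    have hpow := pow_le_pow_left₀ zero_le hroot.le k
    rw [one_div, ENNReal.rpow_inv_natCast_pow hk] at hpow
    exact_mod_cast hpow
  exact squeeze_zero_norm' hbound (tendsto_pow_atTop_nhds_zero_of_lt_one q.2 hq1)

lemma isTopologicallyNilpotent_of_forall_norm_lt_one {A : Type*} [NormedRing A]
    [NormedAlgebra ℂ A] [CompleteSpace A] {a : A} (ha : ∀ μ ∈ spectrum ℂ a, ‖μ‖ < 1) :
    IsTopologicallyNilpotent a := by
  rcases subsingleton_or_nontrivial A with _ | _
  · exact Subsingleton.elim 0 a ▸ .zero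
  exact isTopologicallyNilpotent_of_spectralRadius_lt_one
    (spectrum.spectralRadius_lt_of_forall_lt a (r := 1) ha)

lemma isTopologicallyNilpotent_map_iff {R S F : Type*} [MonoidWithZero R] [TopologicalSpace R]
    [MonoidWithZero S] [TopologicalSpace S] [FunLike F R S] [MonoidWithZeroHomClass F R S] {φ : F}
    (hφ : IsInducing φ) {a : R} :
    IsTopologicallyNilpotent (φ a) ↔ IsTopologicallyNilpotent a := by
  simp only [IsTopologicallyNilpotent, hφ.tendsto_nhds_iff, comp_def, map_pow, map_zero]

lemma isTopologicallyNilpotent_of_spectrum_map_ofReal {ι : Type*} [Fintype ι] [DecidableEq ι]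
    {A : Matrix ι ι ℝ} (hA : ∀ μ ∈ spectrum ℂ (A.map Complex.ofReal), ‖μ‖ < 1) :
    IsTopologicallyNilpotent A := by
  let := Matrix.linftyOpNormedRing (n := ι) (α := ℂ)
  let := Matrix.linftyOpNormedAlgebra (n := ι) (R := ℂ) (α := ℂ)
  have hind : IsInducing (Complex.ofRealHom.mapMatrix (m := ι)) :=
    .piMap fun _ ↦ .piMap fun _ ↦ Complex.isometry_ofReal.isUniformInducing.isInducing
  exact (isTopologicallyNilpotent_map_iff hind).1
    (isTopologicallyNilpotent_of_forall_norm_lt_one hA)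

lemma isTopologicallyNilpotent_of_toMatrix {𝕜 F ι : Type*} [NontriviallyNormedField 𝕜]
    [CompleteSpace 𝕜] [NormedAddCommGroup F] [NormedSpace 𝕜 F] [Fintype ι] [DecidableEq ι]
    (b : Basis ι 𝕜 F) {A : F →L[𝕜] F}
    (hA : IsTopologicallyNilpotent (LinearMap.toMatrix b b (A : F →ₗ[𝕜] F))) :
    IsTopologicallyNilpotent A := by
  have : FiniteDimensional 𝕜 F := b.finiteDimensional_of_finite
  let toOperator : Matrix ι ι 𝕜 ≃ₐ[𝕜] (F →L[𝕜] F) :=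
    (Matrix.toLinAlgEquiv b).trans (Module.End.toContinuousLinearMap F)
  have hcont : Continuous toOperator :=
    toOperator.toLinearMap.continuous_of_finiteDimensional
  have htoOperator : toOperator (LinearMap.toMatrix b b (A : F →ₗ[𝕜] F)) = A := by
    ext v
    exact congrArg (· v) (Matrix.toLin_toMatrix b b (A : F →ₗ[𝕜] F))
  exact htoOperator ▸ hA.map hcont

lemma isTopologicallyNilpotent_comp_comm {𝕜 E F : Type*} [NontriviallyNormedField 𝕜]
    [NormedAddCommGroup E] [NormedSpace 𝕜 E] [NormedAddCommGroup F] [NormedSpace 𝕜 F]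
    {S : E →L[𝕜] F} {T : F →L[𝕜] E} (hST : IsTopologicallyNilpotent (S ∘L T)) :
    IsTopologicallyNilpotent (T ∘L S) := by
  have hpow (k : ℕ) : (T ∘L S) ^ (k + 1) = T ∘L ((S ∘L T) ^ k) ∘L S := by
    induction k with
    | zero => simp [ContinuousLinearMap.one_def]
    | succ k ih =>
      rw [pow_succ, ih, pow_succ]
      rfl
  have hcont : Continuous fun B : F →L[𝕜] F ↦ T ∘L B ∘L S := by fun_prop
  rw [IsTopologicallyNilpotent, ← tendsto_add_atTop_iff_nat 1]
  simpa [hpow, comp_def] using (hcont.tendsto 0).comp hST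

end TopologicallyNilpotent

section AttractingFixedPoint

lemma eventually_tendsto_iterate_of_eventually_dist_le {X : Type*} [PseudoMetricSpace X]
    {G : X → X} {x : X} {r : ℝ} (hr₀ : 0 ≤ r) (hr₁ : r < 1)
    (hG : ∀ᶠ z in 𝓝 x, dist (G z) x ≤ r * dist z x) :
    ∀ᶠ z in 𝓝 x, Tendsto (fun k ↦ G^[k] z) atTop (𝓝 x) := by
  obtain ⟨δ, hδ, hball⟩ := Metric.eventually_nhds_iff_ball.1 hG
  filter_upwards [Metric.ball_mem_nhds x hδ] with z hz
  have hdecay (k : ℕ) : dist (G^[k] z) x ≤ r ^ k * dist z x := by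
    induction k with
    | zero => simp
    | succ k ih =>
      have hmem : G^[k] z ∈ Metric.ball x δ :=
        (ih.trans (mul_le_of_le_one_left dist_nonneg (pow_le_one₀ hr₀ hr₁.le))).trans_lt hz
      calc dist (G^[k + 1] z) x ≤ r * dist (G^[k] z) x := by
            rw [iterate_succ_apply']; exact hball _ hmem
        _ ≤ r * (r ^ k * dist z x) := by gcongr
        _ = r ^ (k + 1) * dist z x := by ring
  refine tendsto_iff_dist_tendsto_zero.2 (squeeze_zero (fun _ ↦ dist_nonneg) hdecay ?_)
  simpa using (tendsto_pow_atTop_nhds_zero_of_lt_one hr₀ hr₁).mul_const (dist z x)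

lemma tendsto_iterate_of_tendsto_iterate_iterate {X : Type*} [TopologicalSpace X] {G : X → X}
    {x z : X} (hx : IsFixedPt G x) (hG : ContinuousAt G x) {m : ℕ} (hm : m ≠ 0)
    (hz : Tendsto (fun p ↦ (G^[m])^[p] z) atTop (𝓝 x)) :
    Tendsto (fun k ↦ G^[k] z) atTop (𝓝 x) := by
  intro V hV
  have hfirst : ∀ᶠ w in 𝓝 x, ∀ j ∈ Finset.range m, G^[j] w ∈ V :=
    (Finset.eventually_all _).2 fun j _ ↦
      (hG.iterate hx j).eventually_mem (by rwa [(hx.iterate j).eq])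
  rw [mem_map]
  filter_upwards [(Nat.tendsto_div_const_atTop hm).eventually (hz.eventually hfirst)] with k hk
  have := hk (k % m) (Finset.mem_range.2 (Nat.mod_lt _ (Nat.pos_of_ne_zero hm)))
  rwa [← iterate_mul, ← iterate_add_apply, Nat.mod_add_div] at this

variable {𝕜 E : Type*} [NontriviallyNormedField 𝕜] [NormedAddCommGroup E] [NormedSpace 𝕜 E]
  {G : E → E} {x : E} {D : E →L[𝕜] E}

lemma eventually_tendsto_iterate_of_norm_fderiv_lt_one (hG : HasFDerivAt G D x)
    (hx : IsFixedPt G x) (hD : ‖D‖ < 1) :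
    ∀ᶠ z in 𝓝 x, Tendsto (fun k ↦ G^[k] z) atTop (𝓝 x) := by
  obtain ⟨r, hDr, hr⟩ := exists_between hD
  refine eventually_tendsto_iterate_of_eventually_dist_le ((norm_nonneg D).trans hDr.le) hr ?_
  filter_upwards [hG.isLittleO.def (sub_pos.2 hDr)] with z hz
  rw [hx.eq] at hz
  calc dist (G z) x = ‖(G z - x - D (z - x)) + D (z - x)‖ := by rw [dist_eq_norm]; abel_nf
    _ ≤ (r - ‖D‖) * ‖z - x‖ + ‖D‖ * ‖z - x‖ := norm_add_le_of_le hz (D.le_opNorm _)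
    _ = r * dist z x := by rw [dist_eq_norm]; ring

lemma eventually_tendsto_iterate_of_isTopologicallyNilpotent (hG : HasFDerivAt G D x)
    (hx : IsFixedPt G x) (hD : IsTopologicallyNilpotent D) :
    ∀ᶠ z in 𝓝 x, Tendsto (fun k ↦ G^[k] z) atTop (𝓝 x) := by
  obtain ⟨m, hm, hDm⟩ : ∃ m : ℕ, m ≠ 0 ∧ ‖D ^ m‖ < 1 :=
    ((eventually_ne_atTop 0).and (hD.norm.eventually_lt_const (by simp))).exists
  filter_upwards [eventually_tendsto_iterate_of_norm_fderiv_lt_one (hG.iterate hx m)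
    (hx.iterate m) hDm] with z hz
  exact tendsto_iterate_of_tendsto_iterate_iterate hx hG.continuousAt hm hz

end AttractingFixedPoint

section Homogeneous

lemma map_smul_of_forall_ne_zero {𝕜 E F : Type*} [Field 𝕜] [NeZero (2 : 𝕜)] [AddCommGroup E]
    [Module 𝕜 E] [AddCommGroup F] [Module 𝕜 F] {f : E → F}
    (hf : ∀ a : 𝕜, a ≠ 0 → ∀ z, f (a • z) = a • f z) (a : 𝕜) (z : E) : f (a • z) = a • f z := by
  rcases eq_or_ne a 0 with rfl | ha
  · have h0 : f 0 = (2 : 𝕜) • f 0 := by simpa using hf 2 two_ne_zero 0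
    simpa [two_smul] using h0
  · exact hf a ha z

lemma iterate_smul {M X : Type*} [SMul M X] {f : X → X} (hf : ∀ (a : M) z, f (a • z) = a • f z)
    (k : ℕ) (a : M) (z : X) : f^[k] (a • z) = a • f^[k] z :=
  Function.Commute.iterate_left (g := (a • ·)) (hf a) k z

variable {𝕜 E : Type*} [NontriviallyNormedField 𝕜] [NormedAddCommGroup E] [NormedSpace 𝕜 E]
  {φ : StrongDual 𝕜 E} {f : E → E} {x z : E}

/-- The map induced by a homogeneous `f` on the affine chart `φ = 1` of projective space. Where
`φ (f z) = 0` its value is `0`, by the convention `0⁻¹ = 0`. -/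
noncomputable def chartMap (φ : StrongDual 𝕜 E) (f : E → E) (z : E) : E :=
  (φ (f z))⁻¹ • f z

lemma isFixedPt_chartMap {lam : 𝕜} (hlam : lam ≠ 0) (hφx : φ x = 1) (hfx : f x = lam • x) :
    IsFixedPt (chartMap φ f) x := by
  simp [IsFixedPt, chartMap, hfx, hφx, hlam]

lemma hasFDerivAt_chartMap {lam : 𝕜} (hlam : lam ≠ 0) (hφx : φ x = 1) (hfx : f x = lam • x)
    {J : E →L[𝕜] E} (hJ : HasFDerivAt f J x) :
    HasFDerivAt (chartMap φ f) (lam⁻¹ • (J - (φ ∘L J).smulRight x)) x := by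
  have hφfx : φ (f x) = lam := by simp [hfx, hφx]
  have hinv : HasFDerivAt (fun z ↦ (φ (f z))⁻¹) (-(lam ^ 2)⁻¹ • φ ∘L J) x :=
    ((hasDerivAt_inv (hφfx.trans_ne hlam)).comp_hasFDerivAt x
      (φ.hasFDerivAt.comp x hJ)).congr_fderiv (by simp [hφfx])
  refine (hinv.smul hJ).congr_fderiv ?_
  ext h
  suffices lam⁻¹ • J h + (-((lam ^ 2)⁻¹ * φ (J h))) • lam • x = lam⁻¹ • (J h - φ (J h) • x) by
    simpa [hfx, hφx] using this
  match_scalars <;> field_simp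

lemma exists_iterate_chartMap_eq_smul (hf : ∀ (a : 𝕜) z, f (a • z) = a • f z) (k : ℕ) (z : E) :
    ∃ a : 𝕜, (chartMap φ f)^[k] z = a • f^[k] z := by
  induction k with
  | zero => exact ⟨1, by simp⟩
  | succ k ih =>
    obtain ⟨a, ha⟩ := ih
    refine ⟨(φ (f (a • f^[k] z)))⁻¹ * a, ?_⟩
    rw [iterate_succ_apply', iterate_succ_apply', ha, chartMap, hf a, smul_smul]

lemma iterate_ne_zero_of_tendsto_chartMap (hf : ∀ (a : 𝕜) z, f (a • z) = a • f z) (hx : x ≠ 0)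
    (hz : Tendsto (fun k ↦ (chartMap φ f)^[k] z) atTop (𝓝 x)) (k : ℕ) : f^[k] z ≠ 0 := by
  intro hk
  have hf0 : f 0 = 0 := by simpa using hf 0 0
  obtain ⟨j, hjx, hkj⟩ := ((hz.eventually_ne hx).and (eventually_ge_atTop k)).exists
  obtain ⟨a, ha⟩ := exists_iterate_chartMap_eq_smul (φ := φ) hf j z
  have hj : f^[j] z = 0 := by
    rw [← Nat.sub_add_cancel hkj, iterate_add_apply, hk, iterate_fixed hf0]
  exact hjx (by rw [ha, hj, smul_zero])

end Homogeneous

section OLine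

variable {E : Type*} [NormedAddCommGroup E] [NormedSpace ℝ E] {f : E → E} {x y z : E}

/-- The distance from the line through `y ≠ 0` to the line through the unit vector `x`, measured
between their unit vectors up to sign. -/
noncomputable def oLineDist (x y : E) : ℝ :=
  min ‖NormedSpace.normalize y - x‖ ‖NormedSpace.normalize y + x‖

/-- Local attractivity of the o-line `span{x} ∖ {0}` for `f`, represented by the unit vector `x`:
the orbits starting on nearby lines avoid `0` and converge to it as lines. -/
def IsLocallyAttractiveOLine (f : E → E) (x : E) : Prop :=
  ∃ ε > 0, ∀ y : E, y ≠ 0 → oLineDist x y < ε →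
    (∀ k : ℕ, f^[k] y ≠ 0) ∧ Tendsto (fun k : ℕ ↦ oLineDist x (f^[k] y)) atTop (𝓝 0)

lemma oLineDist_smul {a : ℝ} (ha : a ≠ 0) (x y : E) : oLineDist x (a • y) = oLineDist x y := by
  unfold oLineDist
  rcases ha.lt_or_gt with ha | ha
  · rw [NormedSpace.normalize_smul_of_neg ha, min_comm, neg_add_eq_sub, norm_sub_rev,
      ← neg_add', norm_neg]
  · rw [NormedSpace.normalize_smul_of_pos ha]

lemma tendsto_oLineDist (hx : ‖x‖ = 1) : Tendsto (oLineDist x) (𝓝 x) (𝓝 0) := by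
  have hnormalize : ContinuousAt NormedSpace.normalize x :=
    (continuousAt_id.norm.inv₀ (by simp [hx])).smul continuousAt_id
  have hcont : ContinuousAt (oLineDist x) x :=
    (hnormalize.sub continuousAt_const).norm.min (hnormalize.add continuousAt_const).norm
  simpa [oLineDist, NormedSpace.normalize_eq_self_of_norm_eq_one hx] using hcont.tendsto

lemma exists_smul_mem_ball_of_oLineDist_lt {ε : ℝ} (hy : y ≠ 0) (hxy : oLineDist x y < ε) :
    ∃ a : ℝ, a ≠ 0 ∧ a • y ∈ Metric.ball x ε := by
  have hnorm : ‖y‖⁻¹ ≠ 0 := inv_ne_zero (norm_ne_zero_iff.2 hy)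
  rcases min_lt_iff.1 hxy with h | h
  · exact ⟨_, hnorm, mem_ball_iff_norm.2 h⟩
  · refine ⟨_, neg_ne_zero.2 hnorm, mem_ball_iff_norm.2 ?_⟩
    rwa [neg_smul, ← neg_add', norm_neg]

lemma tendsto_oLineDist_iterate {φ : StrongDual ℝ E} (hf : ∀ (a : ℝ) z, f (a • z) = a • f z)
    (hx : ‖x‖ = 1) (hz : Tendsto (fun k ↦ (chartMap φ f)^[k] z) atTop (𝓝 x)) :
    Tendsto (fun k ↦ oLineDist x (f^[k] z)) atTop (𝓝 0) := by
  have hx0 : x ≠ 0 := ne_zero_of_norm_ne_zero (hx ▸ one_ne_zero)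
  refine ((tendsto_oLineDist hx).comp hz).congr' ?_
  filter_upwards [hz.eventually_ne hx0] with k hk
  obtain ⟨a, ha⟩ := exists_iterate_chartMap_eq_smul (φ := φ) hf k z
  rw [ha] at hk
  rw [Function.comp_apply, ha, oLineDist_smul (left_ne_zero_of_smul hk)]

theorem isLocallyAttractiveOLine_of_isTopologicallyNilpotent {φ : StrongDual ℝ E}
    (hf : ∀ (a : ℝ) z, f (a • z) = a • f z) (hx : ‖x‖ = 1) (hφx : φ x = 1) {lam : ℝ}
    (hlam : lam ≠ 0) (hfx : f x = lam • x) {J : E →L[ℝ] E} (hJ : HasFDerivAt f J x)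
    (hD : IsTopologicallyNilpotent (lam⁻¹ • (J - (φ ∘L J).smulRight x))) :
    IsLocallyAttractiveOLine f x := by
  have hx0 : x ≠ 0 := ne_zero_of_norm_ne_zero (hx ▸ one_ne_zero)
  obtain ⟨ε, hε, hball⟩ := Metric.eventually_nhds_iff_ball.1
    (eventually_tendsto_iterate_of_isTopologicallyNilpotent
      (hasFDerivAt_chartMap hlam hφx hfx hJ) (isFixedPt_chartMap hlam hφx hfx) hD)
  refine ⟨ε, hε, fun y hy hxy ↦ ?_⟩
  obtain ⟨a, ha, hmem⟩ := exists_smul_mem_ball_of_oLineDist_lt hy hxy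
  have hlim := hball _ hmem
  constructor
  · intro k
    have hk := iterate_ne_zero_of_tendsto_chartMap hf hx0 hlim k
    rw [iterate_smul hf] at hk
    exact right_ne_zero_of_smul hk
  · simpa only [iterate_smul hf, oLineDist_smul ha] using tendsto_oLineDist_iterate hf hx hlim

end OLine

section InnerProductSpace

lemma exists_orthonormalBasis_orthogonal_span_singleton {𝕜 ι E : Type*} [RCLike 𝕜] [Fintype ι]
    [NormedAddCommGroup E] [InnerProductSpace 𝕜 E] {x : E} (hx : x ≠ 0)
    (hcard : Fintype.card ι + 1 = finrank 𝕜 E) {c : ι → E} (hc : Orthonormal 𝕜 c)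
    (hperp : ∀ i, inner 𝕜 (c i) x = 0) :
    ∃ b : OrthonormalBasis ι 𝕜 (𝕜 ∙ x)ᗮ, ∀ i, (b i : E) = c i := by
  have : Fact (finrank 𝕜 E = Fintype.card ι + 1) := ⟨hcard.symm⟩
  have : FiniteDimensional 𝕜 E := .of_fact_finrank_eq_succ (Fintype.card ι)
  have hfinrank : finrank 𝕜 (𝕜 ∙ x)ᗮ = Fintype.card ι :=
    Submodule.finrank_orthogonal_span_singleton hx
  have hmem (i : ι) : c i ∈ (𝕜 ∙ x)ᗮ :=
    Submodule.mem_orthogonal_singleton_iff_inner_left.2 (hperp i)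
  let v (i : ι) : (𝕜 ∙ x)ᗮ := ⟨c i, hmem i⟩
  have hv : Orthonormal 𝕜 v := hc.codRestrict _ hmem
  obtain ⟨b, hb⟩ := Orthonormal.exists_orthonormalBasis_extension_of_card_eq hfinrank
    (s := Set.univ) (hv.comp _ Subtype.val_injective)
  exact ⟨b, fun i ↦ congrArg Subtype.val (hb i trivial)⟩

variable {ι E : Type*} [Fintype ι] [DecidableEq ι] [NormedAddCommGroup E] [InnerProductSpace ℝ E]
  {x : E}

lemma isTopologicallyNilpotent_projection_of_compressionMatrix (hx : ‖x‖ = 1)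
    (b : OrthonormalBasis ι ℝ (ℝ ∙ x)ᗮ) (a : ℝ) {J : E →L[ℝ] E} {A : Matrix ι ι ℝ}
    (hA : ∀ i j, A i j = inner ℝ (b i : E) (J (b j)))
    (hnil : IsTopologicallyNilpotent (a • A)) :
    IsTopologicallyNilpotent (a • (J - (innerSL ℝ x ∘L J).smulRight x)) := by
  let S : E →L[ℝ] (ℝ ∙ x)ᗮ := a • (ℝ ∙ x)ᗮ.orthogonalProjectionOnto ∘L J
  let T : (ℝ ∙ x)ᗮ →L[ℝ] E := (ℝ ∙ x)ᗮ.subtypeL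
  have hmatrix : LinearMap.toMatrix b.toBasis b.toBasis (S ∘L T : _ →L[ℝ] _) = a • A := by
    ext i j
    simp [LinearMap.toMatrix_apply, OrthonormalBasis.repr_apply_apply, S, T, hA]
  have hTS : T ∘L S = a • (J - (innerSL ℝ x ∘L J).smulRight x) := by
    ext h
    simp [S, T, Submodule.starProjection_unit_singleton ℝ hx]
  rw [← hTS]
  exact isTopologicallyNilpotent_comp_comm
    (isTopologicallyNilpotent_of_toMatrix b.toBasis (hmatrix ▸ hnil))

theorem fixed_oline_locally_attractive_general {f : E → E}
    (hhom : ∀ a : ℝ, a ≠ 0 → ∀ z, f (a • z) = a • f z) (hx : ‖x‖ = 1) {lam : ℝ} (hlam : lam ≠ 0)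
    (hfx : f x = lam • x) {J : E →L[ℝ] E} (hJ : HasFDerivAt f J x)
    (b : OrthonormalBasis ι ℝ (ℝ ∙ x)ᗮ) {Jred : Matrix ι ι ℝ}
    (hJred : ∀ i j, Jred i j = inner ℝ (b i : E) (J (b j)))
    (hSchur : ∀ μ ∈ spectrum ℂ ((lam⁻¹ • Jred).map Complex.ofReal), ‖μ‖ < 1) :
    IsLocallyAttractiveOLine f x :=
  isLocallyAttractiveOLine_of_isTopologicallyNilpotent (map_smul_of_forall_ne_zero hhom) hx
    (by simp [hx]) hlam hfx hJ
    (isTopologicallyNilpotent_projection_of_compressionMatrix hx b lam⁻¹ hJred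
      (isTopologicallyNilpotent_of_spectrum_map_ofReal hSchur))

end InnerProductSpace

/-- let `f : ℝⁿ → ℝⁿ` be homogeneous (`f(cx) = c f(x)`, `c ≠ 0`) and
nonvanishing away from `0`, let `x` be a unit vector with `f(x) = λ x`, `λ ≠ 0`,
let `f` be differentiable at `x` with derivative `J`, and let the columns
`c 0, …, c (n-2)` form an orthonormal basis of the orthogonal complement of `x`.
If the `(n-1)×(n-1)` matrix `(1/λ) OᵀJO` (entries `(1/λ)⟪c i, J (c j)⟫`) is Schur,
then the o-line `span{x} ∖ {0}` is locally attractive. -/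
theorem fixed_oline_locally_attractive
    {n : ℕ} (hn : 1 ≤ n)
    (f : EuclideanSpace ℝ (Fin n) → EuclideanSpace ℝ (Fin n))
    (hhom : ∀ (a : ℝ), a ≠ 0 → ∀ z, f (a • z) = a • f z)
    (hnz : ∀ z : EuclideanSpace ℝ (Fin n), z ≠ 0 → f z ≠ 0)
    (x : EuclideanSpace ℝ (Fin n)) (hx : ‖x‖ = 1)
    (lam : ℝ) (hlam : lam ≠ 0) (hfx : f x = lam • x)
    (J : EuclideanSpace ℝ (Fin n) →L[ℝ] EuclideanSpace ℝ (Fin n))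
    (hJ : HasFDerivAt f J x)
    (c : Fin (n - 1) → EuclideanSpace ℝ (Fin n))
    (hortho : Orthonormal ℝ c)
    (hperp : ∀ j, (inner ℝ (c j) x : ℝ) = 0)
    (Jred : Matrix (Fin (n - 1)) (Fin (n - 1)) ℝ)
    (hJred : ∀ i j, Jred i j = (inner ℝ (c i) (J (c j)) : ℝ))
    (hSchur : ∀ μ ∈ spectrum ℂ ((lam⁻¹ • Jred).map (Complex.ofReal)), ‖μ‖ < 1) :
    ∃ ε > 0, ∀ y : EuclideanSpace ℝ (Fin n), y ≠ 0 →
      min ‖‖y‖⁻¹ • y - x‖ ‖‖y‖⁻¹ • y + x‖ < ε →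
      (∀ k : ℕ, f^[k] y ≠ 0) ∧
      Tendsto (fun k : ℕ =>
          min ‖‖f^[k] y‖⁻¹ • f^[k] y - x‖ ‖‖f^[k] y‖⁻¹ • f^[k] y + x‖)
        atTop (nhds 0) := by
  obtain ⟨b, hb⟩ := exists_orthonormalBasis_orthogonal_span_singleton
    (ne_zero_of_norm_ne_zero (hx ▸ one_ne_zero)) (by simp [hn]) hortho hperp
  exact fixed_oline_locally_attractive_general hhom hx hlam hfx hJ b (by simpa only [hb]) hSchur
end

section
/- Let Y be a finite set of positive reals, τ : ℝⁿ → Y, M : Y → ℝ^{n×n}, and define the PETC sample map f(x) := M(τ(x)) x and output sequence y_i(x) := τ(f^i(x)). Assume f^i(z) → 0 as i → ∞ for every z ∈ ℝⁿ. Suppose (y_i) is a stable p-periodic output sequence: y_{i+p} = y_i for all i, and there exist x ∈ ℝⁿ and an open neighborhood U of x such that y_i(x') = y_i for every x' ∈ U and every i ∈ ℕ. Then the matrix M̄ := M(y_{p−1})⋯M(y_1)M(y_0) is Schur: every complex eigenvalue of M̄ has modulus strictly less than 1. -/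
open Matrix Filter
open scoped Topology

/-!
On a set `U` of nonempty interior where all trajectories have the output sequence `y`, the sample
map iterated `k * p` times is the linear map `M̄ ^ k`, so `M̄ ^ k x → 0` for every `x ∈ U`. The
vectors `x` with this property form a subspace, and a subspace with nonempty interior is the whole
space. Hence `M̄ ^ k → 0`, and an eigenvector for `μ` gives `μ ^ k → 0`, that is, `‖μ‖ < 1`.
-/

section DescProd

variable {R : Type*} [Monoid R]

/-- The descending product `A (i - 1) * ⋯ * A 1 * A 0`: the transition matrix over the first `i`
steps of a time-varying linear recurrence. -/
def descProd (A : ℕ → R) (i : ℕ) : R :=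
  (List.ofFn fun j : Fin i => A j).reverse.prod

theorem descProd_zero (A : ℕ → R) : descProd A 0 = 1 := by
  simp [descProd]

theorem descProd_add (A : ℕ → R) (p i : ℕ) :
    descProd A (p + i) = descProd (fun j => A (p + j)) i * descProd A p := by
  simp [descProd, List.ofFn_add]

theorem descProd_succ (A : ℕ → R) (i : ℕ) : descProd A (i + 1) = A i * descProd A i := by
  simp [descProd, -List.ofFn_succ, List.ofFn_succ_last]

theorem descProd_mul_of_periodic {A : ℕ → R} {p : ℕ} (hA : Function.Periodic A p) (k : ℕ) :
    descProd A (k * p) = descProd A p ^ k := by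
  induction k with
  | zero => simp [descProd_zero]
  | succ k ih =>
    have hshift : (fun j => A (p + j)) = A := funext fun j => by rw [add_comm, hA]
    rw [Nat.succ_mul, add_comm, descProd_add, hshift, ih, pow_succ]

end DescProd

theorem iterate_eq_descProd_mulVec {R ι S : Type*} [Semiring R] [Fintype ι] [DecidableEq ι]
    {τ : (ι → R) → S} {M : S → Matrix ι ι R} {f : (ι → R) → (ι → R)}
    (hf : ∀ x, f x = M (τ x) *ᵥ x) {y : ℕ → S} {x : ι → R} (hx : ∀ i, τ (f^[i] x) = y i) (i : ℕ) :
    f^[i] x = descProd (M ∘ y) i *ᵥ x := by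
  induction i with
  | zero => simp [descProd_zero]
  | succ i ih =>
    rw [Function.iterate_succ_apply', hf, hx, ih, mulVec_mulVec, descProd_succ,
      Function.comp_apply]

section TendstoZero

variable {R E F α : Type*} [Semiring R] [AddCommMonoid E] [Module R E] [AddCommMonoid F]
  [Module R F] [TopologicalSpace F] [ContinuousAdd F] [ContinuousConstSMul R F]

/-- The submodule of vectors `x` such that `T a x → 0` along the filter `l`. For the powers of a
linear map along `atTop` this is its stable subspace. -/
def tendstoZeroSubmodule (T : α → E →ₗ[R] F) (l : Filter α) : Submodule R E where
  carrier := {x | Tendsto (fun a => T a x) l (𝓝 0)}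
  zero_mem' := by simpa using tendsto_const_nhds
  add_mem' hx hy := by simpa using hx.add hy
  smul_mem' c _ hx := by simpa using hx.const_smul c

theorem mem_tendstoZeroSubmodule {T : α → E →ₗ[R] F} {l : Filter α} {x : E} :
    x ∈ tendstoZeroSubmodule T l ↔ Tendsto (fun a => T a x) l (𝓝 0) :=
  Iff.rfl

end TendstoZero

theorem tendsto_zero_of_tendsto_mulVec_zero {R m n α : Type*} [NonAssocSemiring R]
    [TopologicalSpace R] [Fintype n] {A : α → Matrix m n R} {l : Filter α}
    (hA : ∀ v, Tendsto (fun a => A a *ᵥ v) l (𝓝 0)) : Tendsto A l (𝓝 0) := by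
  classical
  refine tendsto_pi_nhds.2 fun i => tendsto_pi_nhds.2 fun j => ?_
  simpa using tendsto_pi_nhds.1 (hA (Pi.single j 1)) i

theorem tendsto_zero_of_tendsto_mulVec_zero_on {𝕜 m n α : Type*} [NontriviallyNormedField 𝕜]
    [Fintype n] {A : α → Matrix m n 𝕜} {l : Filter α} {U : Set (n → 𝕜)}
    (hU : (interior U).Nonempty) (hA : ∀ v ∈ U, Tendsto (fun a => A a *ᵥ v) l (𝓝 0)) :
    Tendsto A l (𝓝 0) := by
  let V := tendstoZeroSubmodule (fun a => (A a).mulVecLin) l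
  have hV : V = ⊤ := V.eq_top_of_nonempty_interior' (hU.mono (interior_mono hA))
  exact tendsto_zero_of_tendsto_mulVec_zero fun v =>
    mem_tendstoZeroSubmodule.1 (hV ▸ Submodule.mem_top : v ∈ V)

theorem norm_lt_one_of_hasEigenvector_of_tendsto_pow {𝕜 E : Type*} [NormedField 𝕜]
    [NormedAddCommGroup E] [NormedSpace 𝕜 E] {T : Module.End 𝕜 E} {μ : 𝕜} {v : E}
    (hv : T.HasEigenvector μ v) (hT : Tendsto (fun k : ℕ => (T ^ k) v) atTop (𝓝 0)) :
    ‖μ‖ < 1 := by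
  have hnorm : Tendsto (fun k : ℕ => ‖μ‖ ^ k * ‖v‖) atTop (𝓝 0) := by
    simpa [hv.pow_apply, norm_smul] using hT.norm
  have hpow : Tendsto (fun k : ℕ => ‖μ‖ ^ k) atTop (𝓝 0) := by
    simpa [norm_ne_zero_iff.2 hv.2] using hnorm.div_const ‖v‖
  simpa using tendsto_pow_atTop_nhds_zero_iff.1 hpow

theorem norm_lt_one_of_mem_spectrum_of_tendsto_pow {𝕜 ι : Type*} [NormedField 𝕜] [Fintype ι]
    [DecidableEq ι] {A : Matrix ι ι 𝕜} (hA : Tendsto (fun k : ℕ => A ^ k) atTop (𝓝 0)) {μ : 𝕜}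
    (hμ : μ ∈ spectrum 𝕜 A) : ‖μ‖ < 1 := by
  rw [← spectrum_toLin', ← Module.End.hasEigenvalue_iff_mem_spectrum] at hμ
  obtain ⟨v, hv⟩ := hμ.exists_hasEigenvector
  have hmulVec : Continuous fun B : Matrix ι ι 𝕜 => B *ᵥ v :=
    continuous_id.matrix_mulVec continuous_const
  refine norm_lt_one_of_hasEigenvector_of_tendsto_pow hv ?_
  simpa [← toLin'_pow, Function.comp_def] using (hmulVec.tendsto 0).comp hA

theorem tendsto_map_algebraMap_pow_zero {𝕜 L ι : Type*} [NormedField 𝕜] [NormedRing L]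
    [NormedAlgebra 𝕜 L] [Fintype ι] [DecidableEq ι] {A : Matrix ι ι 𝕜}
    (hA : Tendsto (fun k : ℕ => A ^ k) atTop (𝓝 0)) :
    Tendsto (fun k : ℕ => A.map (algebraMap 𝕜 L) ^ k) atTop (𝓝 0) := by
  have hmap : Continuous fun B : Matrix ι ι 𝕜 => B.map (algebraMap 𝕜 L) :=
    continuous_id.matrix_map (continuous_algebraMap 𝕜 L)
  simpa [Function.comp_def, Matrix.map_pow] using (hmap.tendsto 0).comp hA

theorem tendsto_descProd_pow_zero {𝕜 ι S : Type*} [NontriviallyNormedField 𝕜] [Fintype ι]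
    [DecidableEq ι] {τ : (ι → 𝕜) → S} {M : S → Matrix ι ι 𝕜} {f : (ι → 𝕜) → (ι → 𝕜)}
    (hf : ∀ x, f x = M (τ x) *ᵥ x) {y : ℕ → S} {p : ℕ} (hp : p ≠ 0)
    (hper : Function.Periodic y p) {U : Set (ι → 𝕜)} (hU : (interior U).Nonempty)
    (hout : ∀ x ∈ U, ∀ i, τ (f^[i] x) = y i)
    (hconv : ∀ x ∈ U, Tendsto (fun i => f^[i] x) atTop (𝓝 0)) :
    Tendsto (fun k : ℕ => descProd (M ∘ y) p ^ k) atTop (𝓝 0) := by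
  refine tendsto_zero_of_tendsto_mulVec_zero_on hU fun x hx => ?_
  have hcycle (k : ℕ) : f^[k * p] x = descProd (M ∘ y) p ^ k *ᵥ x := by
    rw [iterate_eq_descProd_mulVec hf (hout x hx), descProd_mul_of_periodic (hper.comp M)]
  have hsub : Tendsto (fun k : ℕ => k * p) atTop atTop :=
    tendsto_id.atTop_mul_const' (Nat.pos_of_ne_zero hp)
  exact ((hconv x hx).comp hsub).congr hcycle

theorem stable_periodic_pattern_schur_general {𝕜 L ι S : Type*} [NontriviallyNormedField 𝕜]
    [NormedField L] [NormedAlgebra 𝕜 L] [Fintype ι] [DecidableEq ι]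
    {τ : (ι → 𝕜) → S} {M : S → Matrix ι ι 𝕜} {f : (ι → 𝕜) → (ι → 𝕜)}
    (hf : ∀ x, f x = M (τ x) *ᵥ x) {y : ℕ → S} {p : ℕ} (hp : p ≠ 0)
    (hper : Function.Periodic y p) {U : Set (ι → 𝕜)} (hU : (interior U).Nonempty)
    (hout : ∀ x ∈ U, ∀ i, τ (f^[i] x) = y i)
    (hconv : ∀ x ∈ U, Tendsto (fun i => f^[i] x) atTop (𝓝 0)) :
    ∀ μ ∈ spectrum L ((descProd (M ∘ y) p).map (algebraMap 𝕜 L)), ‖μ‖ < 1 := by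
  have hpow := tendsto_descProd_pow_zero hf hp hper hU hout hconv
  have hpowL := tendsto_map_algebraMap_pow_zero (L := L) hpow
  exact fun μ hμ => norm_lt_one_of_mem_spectrum_of_tendsto_pow hpowL hμ

/-- for a PETC sample system `f(x) = M(τ(x)) x` with a finite set `Y` of
positive inter-event times, if all state trajectories converge to `0` (implied by GES)
and `(y_i)` is a stable `p`-periodic output sequence, then the cycle matrix
`M̄ = M(y_{p-1})⋯M(y_1)M(y_0)` is Schur (all complex eigenvalues have modulus `< 1`). -/
theorem stable_periodic_pattern_schur
    {n : ℕ} (Y : Finset ℝ) (hYpos : ∀ s ∈ Y, 0 < s)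
    (τ : (Fin n → ℝ) → ℝ) (hτY : ∀ x, τ x ∈ Y)
    (M : ℝ → Matrix (Fin n) (Fin n) ℝ)
    (f : (Fin n → ℝ) → (Fin n → ℝ))
    (hf : ∀ x, f x = (M (τ x)) *ᵥ x)
    (hGES : ∀ z : Fin n → ℝ, Tendsto (fun i : ℕ => f^[i] z) atTop (nhds 0))
    (y : ℕ → ℝ) (p : ℕ) (hp : 1 ≤ p)
    (hper : ∀ i, y (i + p) = y i)
    (hstable : ∃ (x : Fin n → ℝ) (U : Set (Fin n → ℝ)), IsOpen U ∧ x ∈ U ∧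
      ∀ x' ∈ U, ∀ i : ℕ, τ (f^[i] x') = y i)
    (Mbar : Matrix (Fin n) (Fin n) ℝ)
    (hMbar : Mbar = (List.ofFn (fun j : Fin p => M (y j))).reverse.prod) :
    ∀ μ ∈ spectrum ℂ (Mbar.map (Complex.ofReal)), ‖μ‖ < 1 := by
  obtain ⟨x, U, hU, hx, hout⟩ := hstable
  exact hMbar ▸ stable_periodic_pattern_schur_general hf (Nat.ne_zero_of_lt hp) hper
    (hU.interior_eq.symm ▸ ⟨x, hx⟩) hout fun z _ => hGES z
end

section
/- Let (X, E, H) be a finite transition system: X a finite nonempty type, E : X → X → Prop non-blocking (every x ∈ X has some x' with E x x'), and H : X → Y an output map into a finite type Y. Suppose the system is l-detectable for some l ∈ ℕ. Then its behavioral entropy equals the logarithm of the spectral radius of its incidence matrix: limsup_{n→∞} (log N(n))/n = log λ₁(T), where λ₁(T) is the largest modulus among the complex eigenvalues of T. In particular, limsup_{n→∞} (log N(n))/n = limsup_{n→∞} (log N'(n))/n. -/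
open Filter

/-- A run of length `n` of a transition system with transition relation `E`:
a function `r : Fin n → X` with `E (r i) (r (i+1))` for consecutive indices. -/
def TSIsRun {X : Type*} (E : X → X → Prop) {n : ℕ} (r : Fin n → X) : Prop :=
  ∀ (i : ℕ) (h : i + 1 < n), E (r ⟨i, Nat.lt_of_succ_lt h⟩) (r ⟨i + 1, h⟩)

/-!
The runs of length `n + 1` are counted by the sum of the entries of `T ^ n`, which is comparable to
the operator norm `‖T ^ n‖`, so Gelfand's formula gives the growth rate of `N'`. Detectability
recovers the state of a run at every time except the last `l` ones from its trace, so at most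
`|X| ^ l` runs share a trace and `N` has the same growth rate as `N'`.
-/

open Asymptotics Topology

section GrowthRate

lemma log_sub_log_le_log {a b c : ℝ} (ha : a ≠ 0) (h : |a| ≤ c * |b|) :
    Real.log a - Real.log b ≤ Real.log c := by
  have hb : b ≠ 0 := by
    rintro rfl
    simp only [abs_zero, mul_zero] at h
    exact ha (abs_nonpos_iff.mp h)
  rw [← Real.log_div ha hb, ← Real.log_abs, abs_div]
  exact Real.log_le_log (by positivity) ((div_le_iff₀ (abs_pos.mpr hb)).mpr h)

lemma isBigO_one_log_sub_log_of_isTheta {ι : Type*} {F : Filter ι} {f g : ι → ℝ}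
    (h : f =Θ[F] g) :
    (fun i => Real.log (f i) - Real.log (g i)) =O[F] (fun _ => (1 : ℝ)) := by
  obtain ⟨c, hfg⟩ := h.1.bound
  obtain ⟨d, hgf⟩ := h.2.bound
  refine .of_bound (|Real.log c| + |Real.log d|) ?_
  filter_upwards [hfg, hgf, h.eq_zero_iff] with i hc hd hzero
  rw [norm_one, mul_one, Real.norm_eq_abs, abs_le']
  -- where `f` vanishes so does `g`, and both logarithms take the junk value `0`
  by_cases hf : f i = 0
  · rw [hf, hzero.mp hf, sub_self, neg_zero]
    constructor <;> positivity
  · have upper := log_sub_log_le_log hf hc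
    have lower := log_sub_log_le_log (mt hzero.mpr hf) hd
    constructor <;> grind [le_abs_self, abs_nonneg]

lemma tendsto_log_div_natCast_of_isTheta {f g : ℕ → ℝ} {a : ℝ} (h : f =Θ[atTop] g)
    (hg : Tendsto (fun n : ℕ => Real.log (g n) / n) atTop (𝓝 a)) :
    Tendsto (fun n : ℕ => Real.log (f n) / n) atTop (𝓝 a) := by
  have hdiff : Tendsto (fun n : ℕ => (Real.log (f n) - Real.log (g n)) * (n : ℝ)⁻¹) atTop (𝓝 0) :=
    ((isBigO_one_log_sub_log_of_isTheta h).mul (isBigO_refl _ _)).trans_tendsto <| by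
      simpa only [one_mul] using tendsto_inv_atTop_nhds_zero_nat (𝕜 := ℝ)
  simpa only [← div_eq_mul_inv, sub_div, sub_add_cancel, zero_add] using hdiff.add hg

lemma tendsto_div_natCast_succ {u : ℕ → ℝ} {a : ℝ}
    (h : Tendsto (fun n : ℕ => u n / n) atTop (𝓝 a)) :
    Tendsto (fun n : ℕ => u n / (n + 1 : ℕ)) atTop (𝓝 a) := by
  have hmul := h.mul (tendsto_natCast_div_add_atTop (1 : ℝ))
  rw [mul_one] at hmul
  refine hmul.congr' ?_
  filter_upwards [eventually_ne_atTop 0] with n hn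
  rw [div_mul_div_cancel₀ (Nat.cast_ne_zero.mpr hn), Nat.cast_succ]

end GrowthRate

section SpectralRadius

lemma toReal_spectralRadius {𝕜 A : Type*} [NormedField 𝕜] [Ring A] [Algebra 𝕜 A] (a : A) :
    (spectralRadius 𝕜 a).toReal = sSup ((fun z : 𝕜 => ‖z‖) '' spectrum 𝕜 a) := by
  rw [spectralRadius, ← sSup_image, ENNReal.toReal_sSup _ (by simp), Set.image_image]
  rfl

variable {A : Type*} [NormedRing A] [NormedAlgebra ℂ A] [CompleteSpace A] {a : A}

lemma spectralRadius_ne_top (a : A) : spectralRadius ℂ a ≠ ⊤ := by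
  refine ne_top_of_le_ne_top ?_ (spectrum.spectralRadius_le_pow_nnnorm_pow_one_div ℂ a 0)
  finiteness

lemma tendsto_norm_pow_rpow_toReal_spectralRadius (a : A) :
    Tendsto (fun n : ℕ => ‖a ^ n‖ ^ (1 / n : ℝ)) atTop (𝓝 (spectralRadius ℂ a).toReal) := by
  refine ((ENNReal.tendsto_toReal (spectralRadius_ne_top a)).comp
    (spectrum.pow_norm_pow_one_div_tendsto_nhds_spectralRadius a)).congr fun n => ?_
  exact ENNReal.toReal_ofReal (by positivity)

lemma one_le_toReal_spectralRadius_of_le_norm_pow {c : ℝ} (hc : 0 < c)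
    (h : ∀ᶠ n : ℕ in atTop, c ≤ ‖a ^ n‖) : 1 ≤ (spectralRadius ℂ a).toReal := by
  have hroot : Tendsto (fun n : ℕ => c ^ (1 / n : ℝ)) atTop (𝓝 1) := by
    simpa only [Real.rpow_zero] using
      tendsto_const_nhds.rpow (tendsto_one_div_atTop_nhds_zero_nat (𝕜 := ℝ)) (Or.inl hc.ne')
  refine le_of_tendsto_of_tendsto hroot (tendsto_norm_pow_rpow_toReal_spectralRadius a) ?_
  filter_upwards [h] with n hn
  gcongr

lemma tendsto_log_norm_pow_div_natCast {c : ℝ} (hc : 0 < c)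
    (h : ∀ᶠ n : ℕ in atTop, c ≤ ‖a ^ n‖) :
    Tendsto (fun n : ℕ => Real.log ‖a ^ n‖ / n) atTop
      (𝓝 (Real.log (spectralRadius ℂ a).toReal)) := by
  have hρ := one_le_toReal_spectralRadius_of_le_norm_pow hc h
  refine ((tendsto_norm_pow_rpow_toReal_spectralRadius a).log (by positivity)).congr' ?_
  filter_upwards [h] with n hn
  rw [Real.log_rpow (hc.trans_le hn), one_div_mul_eq_div]

end SpectralRadius

section MatrixNorm

open scoped Matrix.Norms.Operator

variable {m n α : Type*} [Fintype m] [Fintype n] [SeminormedAddCommGroup α]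

lemma sum_norm_row_le_linfty_opNorm (A : Matrix m n α) (i : m) : ∑ j, ‖A i j‖ ≤ ‖A‖ := by
  simp only [← coe_nnnorm, ← NNReal.coe_sum, NNReal.coe_le_coe, Matrix.linfty_opNNNorm_def]
  exact Finset.le_sup (f := fun i => ∑ j, ‖A i j‖₊) (Finset.mem_univ i)

lemma linfty_opNorm_le_sum_norm (A : Matrix m n α) : ‖A‖ ≤ ∑ i, ∑ j, ‖A i j‖ := by
  simp only [← coe_nnnorm, ← NNReal.coe_sum, NNReal.coe_le_coe, Matrix.linfty_opNNNorm_def]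
  exact Finset.sup_le fun i hi =>
    Finset.single_le_sum (f := fun i => ∑ j, ‖A i j‖₊) (fun _ _ => zero_le) hi

lemma sum_norm_le_card_mul_linfty_opNorm (A : Matrix m n α) :
    ∑ i, ∑ j, ‖A i j‖ ≤ Fintype.card m * ‖A‖ := by
  simpa using Finset.sum_le_card_nsmul Finset.univ _ _ fun i _ => sum_norm_row_le_linfty_opNorm A i

lemma isTheta_sum_norm_linfty_opNorm {ι : Type*} {F : Filter ι} (A : ι → Matrix m n α) :
    (fun k => ∑ i, ∑ j, ‖A k i j‖) =Θ[F] fun k => ‖A k‖ := by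
  constructor
  · refine .of_bound (Fintype.card m) (.of_forall fun k => ?_)
    rw [Real.norm_of_nonneg (by positivity), norm_norm]
    exact sum_norm_le_card_mul_linfty_opNorm (A k)
  · refine .of_norm_le fun k => ?_
    rw [norm_norm]
    exact linfty_opNorm_le_sum_norm (A k)

end MatrixNorm

section MatrixPower

open Matrix

variable {X R : Type*} [Fintype X] [DecidableEq X] [CommSemiring R]

lemma sum_vecMul_pow_eq_sum_prod (A : Matrix X X R) (n : ℕ) (v : X → R) :
    ∑ y, (v ᵥ* A ^ n) y =
      ∑ r : Fin (n + 1) → X, v (r 0) * ∏ i : Fin n, A (r i.castSucc) (r i.succ) := by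
  induction n generalizing v with
  | zero =>
    rw [← (Equiv.funUnique (Fin 1) X).symm.sum_comp]
    simp
  | succ n ih =>
    rw [pow_succ', ← vecMul_vecMul, ih, ← (Fin.consEquiv fun _ : Fin (n + 2) => X).sum_comp,
      Fintype.sum_prod_type_right]
    refine Finset.sum_congr rfl fun r _ => ?_
    simp only [Fin.prod_univ_succ (n := n), vecMul, dotProduct, Finset.sum_mul, mul_assoc]
    rfl

lemma sum_pow_apply_eq_sum_prod (A : Matrix X X R) (n : ℕ) :
    ∑ x, ∑ y, (A ^ n) x y =
      ∑ r : Fin (n + 1) → X, ∏ i : Fin n, A (r i.castSucc) (r i.succ) := by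
  have h := sum_vecMul_pow_eq_sum_prod A n 1
  simp only [vecMul, one_dotProduct, Pi.one_apply, one_mul] at h
  exact Finset.sum_comm.trans h

end MatrixPower

section Runs

variable {X : Type*} {E : X → X → Prop}

lemma tsIsRun_iff_castSucc_succ {n : ℕ} {r : Fin (n + 1) → X} :
    TSIsRun E r ↔ ∀ i : Fin n, E (r i.castSucc) (r i.succ) :=
  ⟨fun hr i => hr i (Nat.succ_lt_succ i.isLt), fun hr i hi => hr ⟨i, Nat.lt_of_succ_lt_succ hi⟩⟩

lemma TSIsRun.drop {n : ℕ} {r : Fin n → X} (hr : TSIsRun E r) (k : ℕ) :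
    TSIsRun E fun j : Fin (n - k) => r ⟨k + j, by omega⟩ :=
  fun j hj => hr (k + j) (by omega)

lemma exists_tsIsRun_of_nonblocking [Nonempty X] (h : ∀ x, ∃ x', E x x') (n : ℕ) :
    ∃ r : Fin n → X, TSIsRun E r := by
  choose step hstep using h
  refine ⟨fun i => step^[i] (Classical.arbitrary X), fun i _ => ?_⟩
  simpa only [Function.iterate_succ_apply'] using hstep _

variable (E) in
/-- The incidence matrix of a transition system, with natural number entries so that the entries of
its powers are numbers of runs. -/
def tsIncidenceMatrix [DecidableRel E] : Matrix X X ℕ :=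
  Matrix.of fun x x' => if E x x' then 1 else 0

variable [Fintype X] [DecidableEq X] [DecidableRel E]

variable (E) in
lemma card_tsIsRun_succ (n : ℕ) :
    Nat.card {r : Fin (n + 1) → X // TSIsRun E r} = ∑ x, ∑ y, (tsIncidenceMatrix E ^ n) x y := by
  classical
  simp only [sum_pow_apply_eq_sum_prod, tsIncidenceMatrix, Matrix.of_apply, Fintype.prod_ite_zero,
    Finset.prod_const_one, ← tsIsRun_iff_castSucc_succ]
  rw [Nat.card_eq_fintype_card, Fintype.card_subtype, Finset.card_filter]

open scoped Matrix.Norms.Operator in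
variable (E) in
lemma isTheta_card_tsIsRun_succ :
    (fun n => (Nat.card {r : Fin (n + 1) → X // TSIsRun E r} : ℝ)) =Θ[atTop]
      fun n => ‖(tsIncidenceMatrix E).map (Nat.cast : ℕ → ℂ) ^ n‖ := by
  have hpow (n : ℕ) : (tsIncidenceMatrix E).map (Nat.cast : ℕ → ℂ) ^ n =
      (tsIncidenceMatrix E ^ n).map Nat.cast :=
    (map_pow (Nat.castRingHom ℂ).mapMatrix (tsIncidenceMatrix E) n).symm
  convert isTheta_sum_norm_linfty_opNorm
    (fun n => (tsIncidenceMatrix E).map (Nat.cast : ℕ → ℂ) ^ n) using 2 with n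
  simp [card_tsIsRun_succ, hpow]

open scoped Matrix.Norms.Operator in
lemma tendsto_log_card_tsIsRun_div (hrun : ∀ n, ∃ r : Fin n → X, TSIsRun E r) :
    Tendsto (fun n : ℕ => Real.log (Nat.card {r : Fin n → X // TSIsRun E r}) / n) atTop
      (𝓝 (Real.log
        (spectralRadius ℂ ((tsIncidenceMatrix E).map (Nat.cast : ℕ → ℂ))).toReal)) := by
  have hΘ := isTheta_card_tsIsRun_succ E
  obtain ⟨c, hc, hbound⟩ := hΘ.1.exists_pos
  have hnorm : ∀ᶠ n in atTop, c⁻¹ ≤ ‖(tsIncidenceMatrix E).map (Nat.cast : ℕ → ℂ) ^ n‖ := by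
    filter_upwards [hbound.bound] with n hn
    have : Nonempty {r : Fin (n + 1) → X // TSIsRun E r} := nonempty_subtype.mpr (hrun _)
    rw [Real.norm_natCast, norm_norm] at hn
    rw [inv_le_iff_one_le_mul₀' hc]
    exact le_trans (mod_cast Nat.card_pos) hn
  rw [← tendsto_add_atTop_iff_nat 1]
  exact tendsto_div_natCast_succ <|
    tendsto_log_div_natCast_of_isTheta hΘ (tendsto_log_norm_pow_div_natCast (inv_pos.mpr hc) hnorm)

end Runs

section Traces

variable {X Y : Type*} (E : X → X → Prop) (H : X → Y)

/-- The set of traces of the runs of length `n` of a transition system with output map `H`. -/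
def tsTraces (n : ℕ) : Set (Fin n → Y) :=
  {w | ∃ r : Fin n → X, TSIsRun E r ∧ w = H ∘ r}

/-- `l`-detectability: the trace of a run of length at least `l` determines its initial state. -/
def TSIsDetectable (l : ℕ) : Prop :=
  ∀ n, l ≤ n → ∀ r r' : Fin n → X, TSIsRun E r → TSIsRun E r' → H ∘ r = H ∘ r' →
    ∀ h0 : 0 < n, r ⟨0, h0⟩ = r' ⟨0, h0⟩

lemma card_tsTraces_le_card_tsIsRun [Finite X] (n : ℕ) :
    Nat.card (tsTraces E H n) ≤ Nat.card {r : Fin n → X // TSIsRun E r} := by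
  refine Nat.card_le_card_of_surjective (fun r => ⟨H ∘ r.1, r.1, r.2, rfl⟩) ?_
  rintro ⟨_, r, hr, rfl⟩
  exact ⟨⟨r, hr⟩, rfl⟩

namespace TSIsDetectable

variable {E H} {l n : ℕ} {r r' : Fin n → X}

lemma apply_eq (h : TSIsDetectable E H l) (hr : TSIsRun E r) (hr' : TSIsRun E r')
    (htrace : H ∘ r = H ∘ r') (i : Fin n) (hi : l + i ≤ n) : r i = r' i :=
  h (n - i) (by omega) _ _ (hr.drop i) (hr'.drop i)
    (funext fun j => congrFun htrace ⟨i + j, by omega⟩) (by omega)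

lemma eq_of_forall_last_eq (h : TSIsDetectable E H l) (hr : TSIsRun E r) (hr' : TSIsRun E r')
    (htrace : H ∘ r = H ∘ r') (hlast : ∀ i : Fin n, n < l + i → r i = r' i) : r = r' :=
  funext fun i => (le_or_gt (l + i) n).elim (h.apply_eq hr hr' htrace i) (hlast i)

lemma card_tsIsRun_le [Finite X] (h : TSIsDetectable E H l) (hn : l ≤ n) :
    Nat.card {r : Fin n → X // TSIsRun E r} ≤
      Nat.card (tsTraces E H n) * Nat.card X ^ l := by
  have : Finite (tsTraces E H n) :=
    (Set.finite_range fun r : Fin n → X => H ∘ r).subset fun _ ⟨r, _, hw⟩ => ⟨r, hw.symm⟩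
  let traceAndLast (r : {r : Fin n → X // TSIsRun E r}) : tsTraces E H n × (Fin l → X) :=
    (⟨H ∘ r.1, r.1, r.2, rfl⟩, fun j => r.1 ⟨n - l + j, by omega⟩)
  have hinj : Function.Injective traceAndLast := by
    rintro ⟨r, hr⟩ ⟨r', hr'⟩ heq
    have htrace : H ∘ r = H ∘ r' := congrArg (fun p => p.1.1) heq
    refine Subtype.ext (h.eq_of_forall_last_eq hr hr' htrace fun i hi => ?_)
    have hi' : n - l + (i - (n - l)) = i := by omega
    simpa only [traceAndLast, hi'] using
      congrFun (congrArg Prod.snd heq) ⟨i - (n - l), by omega⟩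
  simpa [Nat.card_fun] using Nat.card_le_card_of_injective traceAndLast hinj

lemma isTheta_card_tsTraces [Finite X] (h : TSIsDetectable E H l) :
    (fun n => (Nat.card (tsTraces E H n) : ℝ)) =Θ[atTop]
      fun n => (Nat.card {r : Fin n → X // TSIsRun E r} : ℝ) := by
  constructor
  · refine .of_norm_le fun n => ?_
    simpa using card_tsTraces_le_card_tsIsRun E H n
  · refine .of_bound (Nat.card X ^ l) ?_
    filter_upwards [eventually_ge_atTop l] with n hn
    rw [Real.norm_natCast, Real.norm_natCast, mul_comm]
    exact_mod_cast h.card_tsIsRun_le hn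

end TSIsDetectable

end Traces

theorem behavioral_entropy_eq_log_spectral_radius_general
    {X Y : Type*} [Fintype X] [DecidableEq X] (E : X → X → Prop) [DecidableRel E]
    (hrun : ∀ n, ∃ r : Fin n → X, TSIsRun E r)
    (H : X → Y) (l : ℕ) (hdetect : TSIsDetectable E H l) (N N' : ℕ → ℕ)
    (hN : ∀ m, N m = Nat.card (tsTraces E H m))
    (hN' : ∀ m, N' m = Nat.card {r : Fin m → X // TSIsRun E r})
    (T : Matrix X X ℝ) (hT : ∀ x x', T x x' = if E x x' then 1 else 0)
    (lam1 : ℝ) (hlam1 : lam1 = sSup ((fun z : ℂ => ‖z‖) '' spectrum ℂ (T.map Complex.ofReal))) :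
    Tendsto (fun m : ℕ => Real.log (N m) / m) atTop (𝓝 (Real.log lam1)) ∧
      Tendsto (fun m : ℕ => Real.log (N' m) / m) atTop (𝓝 (Real.log lam1)) := by
  have hTℂ : T.map Complex.ofReal = (tsIncidenceMatrix E).map Nat.cast := by
    ext x x'
    simp [hT, tsIncidenceMatrix, apply_ite]
  have hruns := tendsto_log_card_tsIsRun_div hrun
  rw [← hTℂ, toReal_spectralRadius, ← hlam1] at hruns
  simp only [hN, hN']
  exact ⟨tendsto_log_div_natCast_of_isTheta hdetect.isTheta_card_tsTraces hruns, hruns⟩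

/-- for a finite non-blocking `l`-detectable transition system, the
behavioral entropy `limsup (log N(n))/n` equals `log λ₁(T)`, where `T` is the
incidence matrix and `λ₁(T)` its largest eigenvalue modulus; in particular it equals
the internal entropy `limsup (log N'(n))/n`. -/
theorem behavioral_entropy_eq_log_spectral_radius
    {X Y : Type*} [Fintype X] [DecidableEq X] [Nonempty X] [Fintype Y]
    (E : X → X → Prop) [DecidableRel E]
    (hnonblocking : ∀ x : X, ∃ x' : X, E x x')
    (H : X → Y)
    (l : ℕ)
    (hdetect : ∀ (m : ℕ), l ≤ m → ∀ (r r' : Fin m → X),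
      TSIsRun E r → TSIsRun E r' → H ∘ r = H ∘ r' →
      ∀ (h0 : 0 < m), r ⟨0, h0⟩ = r' ⟨0, h0⟩)
    (N N' : ℕ → ℕ)
    (hN : ∀ m : ℕ, N m = Nat.card {w : Fin m → Y | ∃ r : Fin m → X, TSIsRun E r ∧ w = H ∘ r})
    (hN' : ∀ m : ℕ, N' m = Nat.card {r : Fin m → X // TSIsRun E r})
    (T : Matrix X X ℝ)
    (hT : ∀ x x' : X, T x x' = if E x x' then 1 else 0)
    (lam1 : ℝ)
    (hlam1 : lam1 = sSup ((fun z : ℂ => ‖z‖) '' spectrum ℂ (T.map Complex.ofReal))) :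
    Filter.limsup (fun m : ℕ => Real.log (N m) / m) atTop = Real.log lam1 ∧
    Filter.limsup (fun m : ℕ => Real.log (N m) / m) atTop =
      Filter.limsup (fun m : ℕ => Real.log (N' m) / m) atTop := by
  obtain ⟨hbeh, hint⟩ := behavioral_entropy_eq_log_spectral_radius_general E
    (exists_tsIsRun_of_nonblocking hnonblocking) H l hdetect N N' hN hN' T hT lam1 hlam1
  exact ⟨hbeh.limsup_eq, hbeh.limsup_eq.trans hint.limsup_eq.symm⟩
end
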